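/- Let P be a probability vector on a nonempty finite set S₁ and Q a probability vector on a nonempty finite set S₂. Let (ρ_n) be a pointwise nondecreasing sequence of cost functions S₁ × S₂ → ℝ, uniformly bounded above, with pointwise supremum ρ(i,j) = sup_n ρ_n(i,j). Then W₁(P,Q;ρ) = sup_n W₁(P,Q;ρ_n). -/

import Mathlib

open scoped BigOperators

noncomputable section

/-- The (finite, linear-programming) 1-Wasserstein distance between probability
vectors `P` on `S₁` and `Q` on `S₂` with cost function `d`. -/
def W1 {S₁ S₂ : Type*} [Fintype S₁] [Fintype S₂]
    (P : S₁ → ℝ) (Q : S₂ → ℝ) (d : S₁ → S₂ → ℝ) : ℝ :=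
  sInf { c : ℝ | ∃ lam : S₁ → S₂ → ℝ,
    (∀ i j, 0 ≤ lam i j) ∧ (∀ i, ∑ j, lam i j = P i) ∧
    (∀ j, ∑ i, lam i j = Q j) ∧ c = ∑ i, ∑ j, lam i j * d i j }

/-
The total cost is jointly continuous in the cost function and the plan, and the plans range over
a compact set, so `W1 P Q` is continuous in the cost function. It is also monotone in it, and a
continuous monotone functional commutes with suprema of bounded monotone families.
-/

open Filter Topology

section Couplings

variable {S₁ S₂ : Type*} [Fintype S₁] [Fintype S₂] {P : S₁ → ℝ} {Q : S₂ → ℝ}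

/-- The transport polytope: the nonnegative transport plans with marginals `P` and `Q`, over which
`W1 P Q` minimizes. The common total mass of `P` and `Q` need not be `1`. -/
def couplings (P : S₁ → ℝ) (Q : S₂ → ℝ) : Set (S₁ → S₂ → ℝ) :=
  {lam | (∀ i j, 0 ≤ lam i j) ∧ (∀ i, ∑ j, lam i j = P i) ∧ ∀ j, ∑ i, lam i j = Q j}

/-- The total cost of the transport plan `lam` for the cost function `d`. The cost function comes
first, so that `transportCost d` is the objective of the linear program defining `W1`. -/
def transportCost (d lam : S₁ → S₂ → ℝ) : ℝ :=
  ∑ i, ∑ j, lam i j * d i j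

theorem W1_eq_sInf_image (P : S₁ → ℝ) (Q : S₂ → ℝ) (d : S₁ → S₂ → ℝ) :
    W1 P Q d = sInf (transportCost d '' couplings P Q) := by
  simp only [W1, transportCost, couplings, Set.image, Set.mem_ofPred_eq, and_assoc, eq_comm]

theorem couplings_nonempty (hP : ∀ i, 0 ≤ P i) (hQ : ∀ j, 0 ≤ Q j)
    (hPQ : ∑ i, P i = ∑ j, Q j) : (couplings P Q).Nonempty := by
  -- The product plan, normalized by the common mass; if that mass is `0`, then so are `P` and `Q`.
  refine ⟨fun i j => P i * Q j / ∑ i, P i, fun i j => ?_, fun i => ?_, fun j => ?_⟩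
  · exact div_nonneg (mul_nonneg (hP i) (hQ j)) (Finset.sum_nonneg fun i _ => hP i)
  · rw [← Finset.sum_div, ← Finset.mul_sum, ← hPQ]
    refine mul_div_cancel_of_imp fun hmass => ?_
    exact (Finset.sum_eq_zero_iff_of_nonneg fun i _ => hP i).mp hmass i (Finset.mem_univ i)
  · rw [← Finset.sum_div, ← Finset.sum_mul, hPQ]
    refine mul_div_cancel_left_of_imp fun hmass => ?_
    exact (Finset.sum_eq_zero_iff_of_nonneg fun j _ => hQ j).mp hmass j (Finset.mem_univ j)

theorem isCompact_couplings (P : S₁ → ℝ) (Q : S₂ → ℝ) : IsCompact (couplings P Q) := by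
  have hclosed : IsClosed (couplings P Q) := by
    simp only [couplings, Set.ofPred_and, Set.ofPred_forall]
    refine .inter ?_ (.inter ?_ ?_)
    · exact isClosed_iInter fun i => isClosed_iInter fun j =>
        isClosed_le (by fun_prop) (by fun_prop)
    · exact isClosed_iInter fun i => isClosed_eq (by fun_prop) (by fun_prop)
    · exact isClosed_iInter fun j => isClosed_eq (by fun_prop) (by fun_prop)
  have hsubset : couplings P Q ⊆ Set.Icc 0 fun i _ => P i := by
    rintro lam ⟨hnonneg, hfst, -⟩
    exact ⟨hnonneg, fun i j =>
      (Finset.single_le_sum (fun j _ => hnonneg i j) (Finset.mem_univ j)).trans_eq (hfst i)⟩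
  exact isCompact_Icc.of_isClosed_subset hclosed hsubset

theorem continuous_transportCost :
    Continuous fun p : (S₁ → S₂ → ℝ) × (S₁ → S₂ → ℝ) => transportCost p.1 p.2 := by
  unfold transportCost
  fun_prop

theorem transportCost_mono_left {d d' lam : S₁ → S₂ → ℝ} (hlam : ∀ i j, 0 ≤ lam i j)
    (h : d ≤ d') : transportCost d lam ≤ transportCost d' lam :=
  Finset.sum_le_sum fun i _ => Finset.sum_le_sum fun j _ =>
    mul_le_mul_of_nonneg_left (h i j) (hlam i j)

theorem continuous_W1 (P : S₁ → ℝ) (Q : S₂ → ℝ) : Continuous (W1 P Q) := by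
  simp only [funext (W1_eq_sInf_image P Q)]
  exact (isCompact_couplings P Q).continuous_sInf continuous_transportCost

theorem monotone_W1 (hne : (couplings P Q).Nonempty) : Monotone (W1 P Q) := by
  intro d d' h
  have hbdd : BddBelow (transportCost d '' couplings P Q) :=
    (isCompact_couplings P Q).bddBelow_image
      (continuous_transportCost.comp (.prodMk_right d)).continuousOn
  rw [W1_eq_sInf_image, W1_eq_sInf_image]
  refine le_csInf (hne.image _) ?_
  rintro _ ⟨lam, hlam, rfl⟩
  exact (csInf_le hbdd ⟨lam, hlam, rfl⟩).trans (transportCost_mono_left hlam.1 h)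

end Couplings

theorem W1_iSup_general {ι S₁ S₂ : Type*} [Preorder ι] [IsDirectedOrder ι] [Nonempty ι]
    [Fintype S₁] [Fintype S₂] {P : S₁ → ℝ} {Q : S₂ → ℝ}
    (hP : ∀ i, 0 ≤ P i) (hQ : ∀ j, 0 ≤ Q j) (hPQ : ∑ i, P i = ∑ j, Q j)
    {ρ : ι → S₁ → S₂ → ℝ} (hmono : ∀ i j, Monotone fun n => ρ n i j)
    (hbdd : ∀ i j, BddAbove (Set.range fun n => ρ n i j)) :
    W1 P Q (fun i j => ⨆ n, ρ n i j) = ⨆ n, W1 P Q (ρ n) := by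
  have hlim : Tendsto ρ atTop (𝓝 fun i j => ⨆ n, ρ n i j) :=
    tendsto_pi_nhds.mpr fun i => tendsto_pi_nhds.mpr fun j =>
      tendsto_atTop_ciSup (hmono i j) (hbdd i j)
  have hW1_lim : Tendsto (fun n => W1 P Q (ρ n)) atTop (𝓝 (W1 P Q fun i j => ⨆ n, ρ n i j)) :=
    ((continuous_W1 P Q).tendsto _).comp hlim
  have hW1_mono : Monotone fun n => W1 P Q (ρ n) := fun _ _ hmn =>
    monotone_W1 (couplings_nonempty hP hQ hPQ) fun i j => hmono i j hmn
  exact (isLUB_of_tendsto_atTop hW1_mono hW1_lim).ciSup_eq.symm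

/-- continuity of the Wasserstein distance along pointwise nondecreasing,
uniformly bounded sequences of cost functions. -/
theorem W1_iSup {S₁ S₂ : Type*} [Fintype S₁] [Nonempty S₁] [Fintype S₂] [Nonempty S₂]
    (P : S₁ → ℝ) (Q : S₂ → ℝ)
    (hP0 : ∀ i, 0 ≤ P i) (hP1 : ∑ i, P i = 1)
    (hQ0 : ∀ j, 0 ≤ Q j) (hQ1 : ∑ j, Q j = 1)
    (ρ : ℕ → S₁ → S₂ → ℝ)
    (hmono : ∀ i j, Monotone fun n => ρ n i j)
    (hbdd : ∃ C : ℝ, ∀ n i j, ρ n i j ≤ C) :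
    W1 P Q (fun i j => ⨆ n : ℕ, ρ n i j) = ⨆ n : ℕ, W1 P Q (ρ n) := by
  obtain ⟨C, hC⟩ := hbdd
  exact W1_iSup_general hP0 hQ0 (hP1.trans hQ1.symm) hmono fun i j =>
    ⟨C, Set.forall_mem_range.mpr fun n => hC n i j⟩

end
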